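/- Let (z_k)_{k≥1} be a sequence in ℂ with |z_k| > 1 for all k and Σ_k (|z_k| − 1) < ∞, let (μ_k) be positive reals with Σ_k μ_k < ∞ satisfying: for every A > 0 there is a constant C_A such that for all integers n ≥ 2, Σ_{k : |z_k| < 1 + 1/n} μ_k ≤ C_A·(log n)^{−A}. Let μ = m + Σ_k μ_k δ_{z_k} (i.e. weight w ≡ 1 on the circle). Then liminf_{n→∞} τ_n ≥ ∏_k |z_k|^{−1}. -/

import Mathlib

open MeasureTheory Filter Finset

/-- Normalized arc-length (Haar) measure on the unit circle, viewed as a measure on `ℂ`. -/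
noncomputable def haarCircle : Measure ℂ :=
  ((ENNReal.ofReal (2 * Real.pi))⁻¹ • volume.restrict (Set.Ioc (0 : ℝ) (2 * Real.pi))).map
    (fun θ : ℝ => Complex.exp (θ * Complex.I))

/-- `τ_n`: the supremum of `|c_n|` over polynomials `P(z) = Σ_{j=0}^{n} c_j z^j` with
`∫ |P|² dμ ≤ 1`. -/
noncomputable def tauSeq (μ : Measure ℂ) (n : ℕ) : ℝ :=
  sSup { x : ℝ | ∃ c : ℕ → ℂ,
    (∫ z : ℂ, ‖∑ j ∈ Finset.range (n + 1), c j * z ^ j‖ ^ 2 ∂μ) ≤ 1 ∧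
    x = ‖c n‖ }

/-!
Let `B` be the Blaschke product with zeros `w_k = 1 / conj z_k` and Taylor coefficients `b_j`, and
test the extremal problem on the reversed partial sums `P_n(x) = ∑_{j ≤ n} conj(b_{n-j}) xʲ`. Their
leading coefficient has modulus `|b_0| = ∏ |z_k|⁻¹`, and their energy on the circle is at most `1`
by Bessel's inequality. Since `B(w_k) = 0`, the value `P_n(z_k)` is controlled by the tail
`∑_m b_{n+1+m} w_k^m`. This tail is the integral over the circle of `B(x) x⁻ⁿ` against the Cauchy
kernel `1 / (x - w_k)`, whose `L¹` norm is at most `2 (2 + log (1 / (1 - |w_k|)))`; this bounds it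
uniformly in `n`, while for fixed `k` it tends to `0`. The decay of the masses makes
`∑ μ_k log² (1 - |w_k|)` finite, so by dominated convergence the energy `D_n` carried by the point
masses tends to `0`, and `τ_n ≥ |b_0| / √(1 + D_n)`.
-/

open Metric Topology
open scoped ComplexConjugate Real

section HaarCircle

instance isProbabilityMeasure_haarCircle : IsProbabilityMeasure haarCircle where
  measure_univ := by
    have h : ENNReal.ofReal (2 * π) ≠ 0 := by simp [Real.pi_pos]
    rw [haarCircle, Measure.map_apply (by fun_prop) .univ, Set.preimage_univ, Measure.smul_apply,
      Measure.restrict_apply_univ, Real.volume_Ioc, sub_zero, smul_eq_mul,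
      ENNReal.inv_mul_cancel h ENNReal.ofReal_ne_top]

theorem ae_haarCircle_mem_sphere : ∀ᵐ x ∂haarCircle, x ∈ sphere (0 : ℂ) 1 := by
  refine (ae_map_iff (by fun_prop) (isClosed_sphere (x := (0 : ℂ))).measurableSet).mpr ?_
  exact ae_of_all _ fun θ => by simp

theorem integral_haarCircle_eq_circleAverage {E : Type*} [NormedAddCommGroup E] [NormedSpace ℝ E]
    {f : ℂ → E} (hf : AEStronglyMeasurable f haarCircle) :
    ∫ x, f x ∂haarCircle = Real.circleAverage f 0 1 := by
  rw [haarCircle, integral_map (by fun_prop) hf, integral_smul_measure, Real.circleAverage_def,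
    intervalIntegral.integral_of_le Real.two_pi_pos.le]
  simp [circleMap, Real.pi_pos.le]

variable {E : Type*} [NormedAddCommGroup E] {f : ℂ → E}

theorem aestronglyMeasurable_haarCircle (hf : ContinuousOn f (sphere 0 1)) :
    AEStronglyMeasurable f haarCircle := by
  rw [← Measure.restrict_eq_self_of_ae_mem ae_haarCircle_mem_sphere]
  exact hf.aestronglyMeasurable isClosed_sphere.measurableSet

theorem integrable_haarCircle (hf : ContinuousOn f (sphere 0 1)) : Integrable f haarCircle := by
  have h := hf.integrableOn_compact (μ := haarCircle) (isCompact_sphere 0 1)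
  rwa [IntegrableOn, Measure.restrict_eq_self_of_ae_mem ae_haarCircle_mem_sphere] at h

theorem integral_norm_sq_sum_haarCircle (c : ℕ → ℂ) (n : ℕ) :
    ∫ x, ‖∑ j ∈ range n, c j * x ^ j‖ ^ 2 ∂haarCircle = ∑ j ∈ range n, ‖c j‖ ^ 2 := by
  let P : Polynomial ℂ := ∑ j ∈ range n, Polynomial.monomial j (c j)
  have hP (x : ℂ) : P.eval x = ∑ j ∈ range n, c j * x ^ j := by
    simp [P, Polynomial.eval_finsetSum]
  have hcoeff (j : ℕ) : P.coeff j = if j ∈ range n then c j else 0 := by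
    simp [P, Polynomial.finsetSum_coeff, Polynomial.coeff_monomial]
  have hsupp : P.support ⊆ range n := fun j hj => by
    by_contra h
    simp [hcoeff, h] at hj
  calc
    _ = Real.circleAverage (fun x => ‖P.eval x‖ ^ 2) 0 1 := by
      simp only [hP]
      exact integral_haarCircle_eq_circleAverage
        (aestronglyMeasurable_haarCircle (by fun_prop))
    _ = ∑ j ∈ range n, ‖P.coeff j‖ ^ 2 := by
      rw [← Polynomial.sum_sq_norm_coeff_eq_circleAverage]
      exact sum_subset hsupp fun j _ hj => by simp [Polynomial.notMem_support_iff.mp hj]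
    _ = ∑ j ∈ range n, ‖c j‖ ^ 2 := sum_congr rfl fun j hj => by rw [hcoeff, if_pos hj]

end HaarCircle

section FourierCoefficients

/-- The `n`-th Fourier coefficient `∫ x⁻ⁿ f(x) dm(x)` of a function on the unit circle. For `f`
holomorphic in the disc it is the `n`-th Taylor coefficient. -/
noncomputable def circleCoeff (f : ℂ → ℂ) (n : ℕ) : ℂ :=
  ∫ x, x⁻¹ ^ n * f x ∂haarCircle

theorem continuousOn_inv_pow_mul {f : ℂ → ℂ} (hf : ContinuousOn f (sphere 0 1)) (n : ℕ) :
    ContinuousOn (fun x => x⁻¹ ^ n * f x) (sphere 0 1) :=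
  ((continuousOn_id.inv₀ fun _ hx => ne_zero_of_mem_unit_sphere ⟨_, hx⟩).pow n).mul hf

theorem circleCoeff_eq_fourierCoeffOn {f : ℂ → ℂ} (hf : ContinuousOn f (sphere 0 1)) (n : ℕ) :
    circleCoeff f n = fourierCoeffOn Real.two_pi_pos (fun θ => f (circleMap 0 1 θ)) n := by
  rw [circleCoeff, integral_haarCircle_eq_circleAverage
    (aestronglyMeasurable_haarCircle (continuousOn_inv_pow_mul hf n)), fourierCoeffOn_eq_integral,
    Real.circleAverage_def, sub_zero, one_div]
  congr 1
  refine intervalIntegral.integral_congr fun θ _ => ?_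
  simp only [fourier_coe_apply, circleMap_zero, smul_eq_mul]
  congr 1
  rw [Complex.ofReal_one, one_mul, ← Complex.exp_neg, ← Complex.exp_nat_mul]
  congr 1
  have := Complex.ofReal_ne_zero.mpr Real.pi_ne_zero
  push_cast
  field_simp

variable {f : ℂ → ℂ} (hf : ContinuousOn f (sphere 0 1)) (hf₁ : ∀ x ∈ sphere (0 : ℂ) 1, ‖f x‖ ≤ 1)

include hf hf₁

theorem sum_norm_sq_circleCoeff_le_one (n : ℕ) : ∑ j ∈ range n, ‖circleCoeff f j‖ ^ 2 ≤ 1 := by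
  have hcont : Continuous fun θ => f (circleMap 0 1 θ) :=
    hf.comp_continuous (continuous_circleMap 0 1) fun θ => circleMap_mem_sphere 0 zero_le_one θ
  have hle (θ : ℝ) : ‖f (circleMap 0 1 θ)‖ ≤ 1 := hf₁ _ (circleMap_mem_sphere 0 zero_le_one θ)
  have hparseval := hasSum_sq_fourierCoeffOn Real.two_pi_pos
    (MemLp.of_bound hcont.aestronglyMeasurable 1 (ae_of_all _ hle))
  calc
    _ = ∑ j ∈ (range n).map Nat.castEmbedding,
        ‖fourierCoeffOn Real.two_pi_pos (fun θ => f (circleMap 0 1 θ)) j‖ ^ 2 := by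
      simp [circleCoeff_eq_fourierCoeffOn hf]
    _ ≤ Real.circleAverage (fun x => ‖f x‖ ^ 2) 0 1 := by
      simpa only [sub_zero, Real.circleAverage_def] using
        sum_le_hasSum _ (fun _ _ => by positivity) hparseval
    _ ≤ 1 := by
      refine Real.circleAverage_mono_on_of_le_circle ?_ fun x hx => ?_
      · exact (hf.norm.pow 2).circleIntegrable zero_le_one
      · exact pow_le_one₀ (norm_nonneg _) (hf₁ x (by simpa using hx))

theorem norm_circleCoeff_le_one (n : ℕ) : ‖circleCoeff f n‖ ≤ 1 := by
  rw [← sq_le_one_iff₀ (norm_nonneg _)]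
  exact (single_le_sum (f := fun j => ‖circleCoeff f j‖ ^ 2) (fun _ _ => by positivity)
    (self_mem_range_succ n)).trans (sum_norm_sq_circleCoeff_le_one hf hf₁ (n + 1))

end FourierCoefficients

section CauchyTransform

theorem hasSum_circleCoeff_mul_pow {f : ℂ → ℂ} (hf : ContinuousOn f (sphere 0 1)) (n : ℕ) {w : ℂ}
    (hw : ‖w‖ < 1) :
    HasSum (fun m => circleCoeff f (n + m) * w ^ m)
      (∫ x, x⁻¹ ^ n * (x / (x - w) * f x) ∂haarCircle) := by
  have hgeom := hasSum_geometric_of_lt_one (norm_nonneg w) hw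
  have hsum : HasSum (fun m => ∫ x, x⁻¹ ^ (n + m) * f x * w ^ m ∂haarCircle)
      (∫ x, x⁻¹ ^ n * (x / (x - w) * f x) ∂haarCircle) := by
    refine hasSum_integral_of_dominated_convergence (fun m x => ‖f x‖ * ‖w‖ ^ m)
      (fun m => ?_) (fun m => ?_) (ae_of_all _ fun x => hgeom.summable.mul_left _) ?_ ?_
    · exact aestronglyMeasurable_haarCircle
        ((continuousOn_inv_pow_mul hf _).mul continuousOn_const)
    · filter_upwards [ae_haarCircle_mem_sphere] with x hx
      simp [mem_sphere_zero_iff_norm.mp hx]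
    · simp_rw [tsum_mul_left]
      exact (integrable_haarCircle hf).norm.mul_const _
    · filter_upwards [ae_haarCircle_mem_sphere] with x hx
      have hx₁ : ‖x‖ = 1 := mem_sphere_zero_iff_norm.mp hx
      have hx₀ : x ≠ 0 := ne_zero_of_mem_unit_sphere ⟨x, hx⟩
      have hker : HasSum (fun m => (x⁻¹ * w) ^ m) (x / (x - w)) := by
        have h : x / (x - w) = (1 - x⁻¹ * w)⁻¹ := by
          rw [← inv_div, sub_div, div_self hx₀, div_eq_inv_mul]
        exact h ▸ hasSum_geometric_of_norm_lt_one (by simpa [hx₁] using hw)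
      refine ((hker.mul_right (f x)).mul_left (x⁻¹ ^ n)).congr_fun fun m => ?_
      ring
  simpa only [circleCoeff, integral_mul_const] using hsum

theorem continuousOn_sphere_of_diffContOnCl {f : ℂ → ℂ} (hf : DiffContOnCl ℂ f (ball 0 1)) :
    ContinuousOn f (sphere 0 1) := by
  refine hf.continuousOn.mono ?_
  rw [closure_ball _ one_ne_zero]
  exact sphere_subset_closedBall

theorem hasSum_circleCoeff_of_diffContOnCl {f : ℂ → ℂ} (hf : DiffContOnCl ℂ f (ball 0 1)) {w : ℂ}
    (hw : ‖w‖ < 1) : HasSum (fun m => circleCoeff f m * w ^ m) (f w) := by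
  have hcont := continuousOn_sphere_of_diffContOnCl hf
  have hne : ∀ x ∈ sphere (0 : ℂ) 1, x - w ≠ 0 := fun x hx h => by
    rw [sub_eq_zero.mp h, mem_sphere_zero_iff_norm] at hx
    exact hw.ne hx
  have hker : ContinuousOn (fun x => x / (x - w) * f x) (sphere 0 1) :=
    (continuousOn_id.div (by fun_prop) hne).mul hcont
  have hcauchy : Real.circleAverage (fun x => x / (x - w) * f x) 0 1 = f w := by
    have h := DiffContOnCl.circleAverage_smul_div (R := 1) (c := 0) (w := w) (f := f)
      (by rwa [abs_one]) (by simpa using hw)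
    simpa only [sub_zero, smul_eq_mul] using h
  have hsum := hasSum_circleCoeff_mul_pow hcont 0 hw
  simp only [zero_add, pow_zero, one_mul] at hsum
  rwa [integral_haarCircle_eq_circleAverage (aestronglyMeasurable_haarCircle hker),
    hcauchy] at hsum

end CauchyTransform

section CauchyKernel

theorem integral_inv_add_abs {a d : ℝ} (ha : 0 ≤ a) (hd : 0 < d) :
    ∫ t in -a..a, (d + |t|)⁻¹ = 2 * Real.log (1 + a / d) := by
  have hcont : Continuous fun t : ℝ => (d + |t|)⁻¹ :=
    (by fun_prop : Continuous fun t : ℝ => d + |t|).inv₀ fun t => by positivity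
  have hright : ∫ t in 0..a, (d + |t|)⁻¹ = Real.log (1 + a / d) := calc
    _ = ∫ t in 0..a, (d + t)⁻¹ := intervalIntegral.integral_congr fun t ht => by
      rw [Set.uIcc_of_le ha] at ht
      simp only [abs_of_nonneg ht.1]
    _ = Real.log (1 + a / d) := by
      rw [intervalIntegral.integral_comp_add_left (fun t => t⁻¹),
        integral_inv_of_pos (by linarith) (by linarith), add_zero, add_div, div_self hd.ne']
  have hleft : ∫ t in -a..0, (d + |t|)⁻¹ = ∫ t in 0..a, (d + |t|)⁻¹ := by
    simpa using (intervalIntegral.integral_comp_neg (a := 0) (b := a) fun t => (d + |t|)⁻¹).symm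
  rw [← intervalIntegral.integral_add_adjacent_intervals (hcont.intervalIntegrable _ 0)
    (hcont.intervalIntegrable 0 _), hleft, hright, two_mul]

theorem le_norm_exp_mul_I_sub {r t : ℝ} (hr₀ : 0 ≤ r) (hr : r ≤ 1) (ht : |t| ≤ π) :
    (1 - r + |t|) / (2 * π) ≤ ‖Complex.exp (t * Complex.I) - r‖ := by
  have hπ := Real.pi_gt_three
  have hexp : ‖Complex.exp (t * Complex.I)‖ = 1 := Complex.norm_exp_ofReal_mul_I t
  have hradial : 1 - r ≤ ‖Complex.exp (t * Complex.I) - r‖ := by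
    have h := norm_sub_norm_le (Complex.exp (t * Complex.I)) r
    rwa [hexp, Complex.norm_real, Real.norm_of_nonneg hr₀] at h
  have hchord : 2 * (|t| / π) ≤ ‖Complex.exp (t * Complex.I) - 1‖ := by
    have h := Real.mul_abs_le_abs_sin (x := t / 2) (by rw [abs_div, abs_two]; linarith)
    rw [mul_comm (t : ℂ), Complex.norm_exp_I_mul_ofReal_sub_one, norm_mul, Real.norm_eq_abs,
      Real.norm_eq_abs, abs_two]
    rw [abs_div, abs_two] at h
    calc 2 * (|t| / π) = 2 * (2 / π * (|t| / 2)) := by ring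
      _ ≤ _ := by gcongr
  have hangular : 2 * (|t| / π) ≤ ‖Complex.exp (t * Complex.I) - r‖ + (1 - r) := calc
    _ ≤ ‖Complex.exp (t * Complex.I) - 1‖ := hchord
    _ ≤ ‖Complex.exp (t * Complex.I) - r‖ + ‖(r : ℂ) - 1‖ := norm_sub_le_norm_sub_add_norm_sub ..
    _ = ‖Complex.exp (t * Complex.I) - r‖ + (1 - r) := by
      rw [← Complex.ofReal_one, ← Complex.ofReal_sub, Complex.norm_real, Real.norm_of_nonpos
        (by linarith), neg_sub]
  have hhalf : |t| / π ≤ ‖Complex.exp (t * Complex.I) - r‖ := by linarith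
  rw [div_le_iff₀ (by positivity)] at hhalf ⊢
  nlinarith [abs_nonneg t]

theorem norm_circleMap_add_arg_sub (w : ℂ) (t : ℝ) :
    ‖circleMap 0 1 (t + w.arg) - w‖ = ‖Complex.exp (t * Complex.I) - ‖w‖‖ := by
  have h : circleMap 0 1 (t + w.arg) - w =
      (Complex.exp (t * Complex.I) - ‖w‖) * Complex.exp (w.arg * Complex.I) := by
    conv_lhs => rw [← Complex.norm_mul_exp_arg_mul_I w]
    simp [circleMap, add_mul, Complex.exp_add, sub_mul]
  rw [h, norm_mul, Complex.norm_exp_ofReal_mul_I, mul_one]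

theorem circleAverage_inv_norm_sub (w : ℂ) :
    Real.circleAverage (fun x => ‖x - w‖⁻¹) 0 1 =
      (2 * π)⁻¹ * ∫ t in -π..π, ‖Complex.exp (t * Complex.I) - ‖w‖‖⁻¹ := by
  rw [Real.circleAverage_eq_integral_add (w.arg - π), smul_eq_mul]
  congr 1
  calc
    _ = ∫ θ in 0..2 * π, ‖Complex.exp ((θ - π : ℝ) * Complex.I) - ‖w‖‖⁻¹ := by
      congr with θ
      rw [← norm_circleMap_add_arg_sub, sub_add_eq_add_sub, add_sub_assoc]
    _ = _ := by
      rw [intervalIntegral.integral_comp_sub_right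
        fun t : ℝ => ‖Complex.exp (t * Complex.I) - ‖w‖‖⁻¹]
      congr 1 <;> ring

theorem integral_inv_norm_sub_haarCircle_le {w : ℂ} (hw : ‖w‖ < 1) :
    ∫ x, ‖x - w‖⁻¹ ∂haarCircle ≤ 2 * (2 - Real.log (1 - ‖w‖)) := by
  have hd : 0 < 1 - ‖w‖ := by linarith
  have hlog : Real.log (1 + π / (1 - ‖w‖)) ≤ 2 - Real.log (1 - ‖w‖) := by
    have hexp : 1 + π ≤ Real.exp 2 := by
      linarith [Real.quadratic_le_exp_of_nonneg zero_le_two, Real.pi_lt_four]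
    rw [one_add_div hd.ne', Real.log_div (by positivity) hd.ne']
    gcongr
    rw [Real.log_le_iff_le_exp (by positivity)]
    linarith [norm_nonneg w]
  have hne (t : ℝ) : Complex.exp (t * Complex.I) - ‖w‖ ≠ 0 := fun h => by
    have h₁ := congrArg norm (sub_eq_zero.mp h)
    rw [Complex.norm_exp_ofReal_mul_I, Complex.norm_real, norm_norm] at h₁
    exact hw.ne' h₁
  have hbound (t : ℝ) (ht : t ∈ Set.Icc (-π) π) :
      ‖Complex.exp (t * Complex.I) - ‖w‖‖⁻¹ ≤ 2 * π * (1 - ‖w‖ + |t|)⁻¹ := by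
    rw [← div_eq_mul_inv, ← inv_div]
    exact inv_anti₀ (by positivity)
      (le_norm_exp_mul_I_sub (norm_nonneg w) hw.le (abs_le.mpr ht))
  calc
    _ = (2 * π)⁻¹ * ∫ t in -π..π, ‖Complex.exp (t * Complex.I) - ‖w‖‖⁻¹ := by
      rw [← circleAverage_inv_norm_sub]
      exact integral_haarCircle_eq_circleAverage (by fun_prop)
    _ ≤ (2 * π)⁻¹ * ∫ t in -π..π, 2 * π * (1 - ‖w‖ + |t|)⁻¹ := by
      gcongr
      refine intervalIntegral.integral_mono_on (by linarith [Real.pi_pos])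
        (Continuous.intervalIntegrable ?_ _ _) (Continuous.intervalIntegrable ?_ _ _) hbound
      · fun_prop (disch := simpa using hne)
      · fun_prop (disch := intro t; positivity)
    _ = 2 * Real.log (1 + π / (1 - ‖w‖)) := by
      rw [intervalIntegral.integral_const_mul, inv_mul_cancel_left₀ Real.two_pi_pos.ne',
        integral_inv_add_abs Real.pi_pos.le hd]
    _ ≤ _ := by gcongr

theorem norm_tsum_circleCoeff_mul_pow_le {f : ℂ → ℂ} (hf : ContinuousOn f (sphere 0 1))
    (hf₁ : ∀ x ∈ sphere (0 : ℂ) 1, ‖f x‖ ≤ 1) (n : ℕ) {w : ℂ} (hw : ‖w‖ < 1) :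
    ‖∑' m, circleCoeff f (n + m) * w ^ m‖ ≤ 2 * (2 - Real.log (1 - ‖w‖)) := by
  have hne : ∀ x ∈ sphere (0 : ℂ) 1, ‖x - w‖ ≠ 0 := fun x hx h => by
    rw [norm_eq_zero, sub_eq_zero] at h
    exact hw.ne (h ▸ mem_sphere_zero_iff_norm.mp hx)
  rw [(hasSum_circleCoeff_mul_pow hf n hw).tsum_eq]
  refine (norm_integral_le_of_norm_le (integrable_haarCircle (by fun_prop (disch := assumption)))
    ?_).trans (integral_inv_norm_sub_haarCircle_le hw)
  filter_upwards [ae_haarCircle_mem_sphere] with x hx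
  have hx₁ : ‖x‖ = 1 := mem_sphere_zero_iff_norm.mp hx
  simpa [hx₁] using mul_le_of_le_one_right (inv_nonneg.mpr (norm_nonneg (x - w))) (hf₁ x hx)

end CauchyKernel

section Blaschke

variable {ι : Type*} {w : ι → ℂ} {s : Finset ι}

/-- The finite Blaschke product with zeros `w i`, `i ∈ s`, in the unit disc, with factors normalised
as `(w i - x) / (1 - conj (w i) * x)`, so that each factor takes the value `w i` at `0`. -/
noncomputable def finiteBlaschke (w : ι → ℂ) (s : Finset ι) (x : ℂ) : ℂ :=
  ∏ i ∈ s, (w i - x) / (1 - conj (w i) * x)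

theorem finiteBlaschke_zero : finiteBlaschke w s 0 = ∏ i ∈ s, w i := by
  simp [finiteBlaschke]

theorem finiteBlaschke_eq_zero {i : ι} (hi : i ∈ s) : finiteBlaschke w s (w i) = 0 :=
  prod_eq_zero hi (by simp)

theorem one_sub_conj_mul_ne_zero {a x : ℂ} (ha : ‖a‖ < 1) (hx : ‖x‖ ≤ 1) :
    1 - conj a * x ≠ 0 := fun h => by
  have h₁ : ‖a‖ * ‖x‖ = 1 := by rw [← RCLike.norm_conj a, ← norm_mul, ← sub_eq_zero.mp h, norm_one]
  exact (mul_lt_one_of_nonneg_of_lt_one_left (norm_nonneg a) ha hx).ne h₁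

theorem diffContOnCl_finiteBlaschke (hw : ∀ i, ‖w i‖ < 1) :
    DiffContOnCl ℂ (finiteBlaschke w s) (ball 0 1) := by
  refine DifferentiableOn.diffContOnCl ?_
  rw [closure_ball _ one_ne_zero]
  refine DifferentiableOn.fun_finsetProd fun i _ => ?_
  exact DifferentiableOn.div (by fun_prop) (by fun_prop) fun x hx =>
    one_sub_conj_mul_ne_zero (hw i) (by simpa using hx)

theorem norm_finiteBlaschke_le_one {x : ℂ} (hx : x ∈ sphere (0 : ℂ) 1) :
    ‖finiteBlaschke w s x‖ ≤ 1 := by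
  have hx₁ : ‖x‖ = 1 := mem_sphere_zero_iff_norm.mp hx
  have hdenom (i : ι) : ‖1 - conj (w i) * x‖ = ‖w i - x‖ := by
    have hconj : conj x * x = 1 := by simp [Complex.conj_mul', hx₁]
    have h : 1 - conj (w i) * x = conj (x - w i) * x := by
      rw [map_sub, sub_mul, hconj]
    rw [h, norm_mul, RCLike.norm_conj, hx₁, mul_one, norm_sub_rev]
  rw [finiteBlaschke, norm_prod]
  refine prod_le_one (fun _ _ => norm_nonneg _) fun i _ => ?_
  rw [norm_div, hdenom]
  exact div_self_le_one _

theorem continuousOn_finiteBlaschke (hw : ∀ i, ‖w i‖ < 1) :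
    ContinuousOn (finiteBlaschke w s) (sphere 0 1) :=
  continuousOn_sphere_of_diffContOnCl (diffContOnCl_finiteBlaschke hw)

theorem norm_circleCoeff_finiteBlaschke_zero (hw : ∀ i, ‖w i‖ < 1) :
    ‖circleCoeff (finiteBlaschke w s) 0‖ = ∏ i ∈ s, ‖w i‖ := by
  have h := hasSum_circleCoeff_of_diffContOnCl (diffContOnCl_finiteBlaschke (s := s) hw)
    (w := 0) (by simp)
  have h₀ := h.unique (hasSum_single 0 fun m hm => by simp [hm])
  rw [pow_zero, mul_one] at h₀
  rw [← h₀, finiteBlaschke_zero, norm_prod]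

end Blaschke

section BoundedCoefficients

variable {α : Type*} {l : Filter α}

theorem summable_mul_pow_of_norm_le_one {b : ℕ → ℂ} (hb : ∀ j, ‖b j‖ ≤ 1) {x : ℂ} (hx : ‖x‖ < 1) :
    Summable fun j => b j * x ^ j :=
  .of_norm_bounded (summable_geometric_of_lt_one (norm_nonneg x) hx) fun j => by
    simpa using mul_le_of_le_one_left (by positivity) (hb j)

theorem tendsto_tsum_mul_pow {a : α → ℕ → ℂ} {b : ℕ → ℂ} (ha : ∀ i j, ‖a i j‖ ≤ 1)
    (hab : ∀ j, Tendsto (a · j) l (𝓝 (b j))) {x : ℂ} (hx : ‖x‖ < 1) :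
    Tendsto (fun i => ∑' j, a i j * x ^ j) l (𝓝 (∑' j, b j * x ^ j)) := by
  refine tendsto_tsum_of_dominated_convergence
    (summable_geometric_of_lt_one (norm_nonneg x) hx) (fun j => (hab j).mul_const _)
    (Eventually.of_forall fun i j => ?_)
  simpa using mul_le_of_le_one_left (by positivity) (ha i j)

end BoundedCoefficients

section InfiniteBlaschke

variable {ι : Type*} {w : ι → ℂ}

theorem exists_tendsto_circleCoeff_finiteBlaschke (hw : ∀ i, ‖w i‖ < 1) :
    ∃ (l : Filter (Finset ι)) (b : ℕ → ℂ), l.NeBot ∧ l ≤ atTop ∧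
      ∀ j, Tendsto (fun s => circleCoeff (finiteBlaschke w s) j) l (𝓝 (b j)) := by
  have hmem : ∀ s, (circleCoeff (finiteBlaschke w s)) ∈
      Set.univ.pi fun _ : ℕ => closedBall (0 : ℂ) 1 := fun s j _ => by
    rw [mem_closedBall_zero_iff]
    exact norm_circleCoeff_le_one (continuousOn_finiteBlaschke hw)
      (fun x hx => norm_finiteBlaschke_le_one hx) j
  -- An ultrafilter replaces the extraction of a subsequence, which would need `ι` countable.
  let l := Ultrafilter.of (atTop : Filter (Finset ι))
  obtain ⟨b, -, hb⟩ := (isCompact_univ_pi fun _ => isCompact_closedBall 0 1).ultrafilter_le_nhds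
    (l.map fun s => circleCoeff (finiteBlaschke w s))
    (tendsto_principal.mpr (Eventually.of_forall hmem))
  exact ⟨l, b, inferInstance, Ultrafilter.of_le _, tendsto_pi_nhds.mp hb⟩

theorem exists_blaschke_coeff (hw : ∀ i, ‖w i‖ < 1) {L : ℝ} (hL : HasProd (fun i => ‖w i‖) L) :
    ∃ b : ℕ → ℂ, ‖b 0‖ = L ∧ (∀ n, ∑ j ∈ range n, ‖b j‖ ^ 2 ≤ 1) ∧
      (∀ i, HasSum (fun j => b j * w i ^ j) 0) ∧
      ∀ n x, ‖x‖ < 1 → ‖∑' m, b (n + m) * x ^ m‖ ≤ 2 * (2 - Real.log (1 - ‖x‖)) := by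
  obtain ⟨l, b, _, hl, hb⟩ := exists_tendsto_circleCoeff_finiteBlaschke hw
  have hcont (s : Finset ι) := continuousOn_finiteBlaschke (s := s) hw
  have hnorm (s : Finset ι) (x : ℂ) (hx : x ∈ sphere (0 : ℂ) 1) :=
    norm_finiteBlaschke_le_one (w := w) (s := s) hx
  have hcoeff (s : Finset ι) := norm_circleCoeff_le_one (hcont s) (hnorm s)
  have hb₁ (j : ℕ) : ‖b j‖ ≤ 1 := le_of_tendsto (hb j).norm (Eventually.of_forall (hcoeff · j))
  refine ⟨b, ?_, fun n => ?_, fun i => ?_, fun n x hx => ?_⟩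
  · refine tendsto_nhds_unique (hb 0).norm ?_
    simp only [norm_circleCoeff_finiteBlaschke_zero hw]
    exact hL.mono_left hl
  · exact le_of_tendsto (tendsto_finsetSum _ fun j _ => (hb j).norm.pow 2)
      (Eventually.of_forall fun s => sum_norm_sq_circleCoeff_le_one (hcont s) (hnorm s) n)
  · have hzero : ∀ᶠ s in l, ∑' j, circleCoeff (finiteBlaschke w s) j * w i ^ j = 0 := by
      filter_upwards [hl (eventually_ge_atTop {i})] with s hs
      rw [(hasSum_circleCoeff_of_diffContOnCl (diffContOnCl_finiteBlaschke hw) (hw i)).tsum_eq]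
      exact finiteBlaschke_eq_zero (singleton_subset_iff.mp hs)
    rw [← tendsto_nhds_unique (tendsto_tsum_mul_pow hcoeff hb (hw i))
      (tendsto_const_nhds.congr' (hzero.mono fun _ h => h.symm))]
    exact (summable_mul_pow_of_norm_le_one hb₁ (hw i)).hasSum
  · exact le_of_tendsto
      (tendsto_tsum_mul_pow (fun s m => hcoeff s (n + m)) (fun m => hb (n + m)) hx).norm
      (Eventually.of_forall fun s => norm_tsum_circleCoeff_mul_pow_le (hcont s) (hnorm s) n hx)

end InfiniteBlaschke

section LogSummability

variable {ι : Type*} {μ : ι → ℝ}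

theorem summable_mul_sq_of_summable_tail (hμ : ∀ k, 0 ≤ μ k) (hμs : Summable μ) {J : ι → ℕ}
    (htail : Summable fun j : ℕ => (2 * j + 1) * ∑' k : {k // j < J k}, μ k) :
    Summable fun k => μ k * (J k : ℝ) ^ 2 := by
  have hodd (n : ℕ) : ∑ j ∈ range n, (2 * j + 1 : ℝ) = (n : ℝ) ^ 2 := by
    induction n with
    | zero => simp
    | succ n ih => rw [sum_range_succ, ih]; push_cast; ring
  let F : ℕ × ι → ℝ := fun p => (2 * p.1 + 1) * {k | p.1 < J k}.indicator μ p.2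
  have hF : 0 ≤ F := fun p => mul_nonneg (by positivity) (Set.indicator_nonneg (fun k _ => hμ k) _)
  have hsummable : Summable F := by
    refine (summable_prod_of_nonneg hF).mpr ⟨fun j => ?_, htail.congr fun j => ?_⟩
    · exact (hμs.indicator {k | j < J k}).mul_left (2 * j + 1 : ℝ)
    · exact (congrArg _ (tsum_subtype {k | j < J k} μ)).trans tsum_mul_left.symm
  refine hsummable.prod_symm.prod.congr fun k => Eq.symm ?_
  calc
    μ k * (J k : ℝ) ^ 2 = ∑ j ∈ range (J k), F (j, k) := by
      rw [← hodd, mul_sum]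
      refine sum_congr rfl fun j hj => ?_
      simp only [F]
      rw [Set.indicator_of_mem (by simpa using hj), mul_comm]
    _ = ∑' j, F (j, k) := by
      refine (tsum_eq_sum fun j hj => ?_).symm
      simp only [F]
      rw [Set.indicator_of_notMem (by simpa using hj), mul_zero]

theorem neg_log_one_sub_inv_le {x : ℝ} (hx : 1 < x) :
    -Real.log (1 - x⁻¹) ≤ ⌈-Real.logb 2 (x - 1)⌉₊ + 1 := by
  have hδ : 0 < x - 1 := by linarith
  set J := ⌈-Real.logb 2 (x - 1)⌉₊
  have hJ : (x - 1)⁻¹ ≤ 2 ^ J := by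
    rw [← Real.rpow_natCast, ← Real.logb_le_iff_le_rpow one_lt_two (by positivity), Real.logb_inv]
    exact Nat.le_ceil _
  have hinv : (1 - x⁻¹)⁻¹ = 1 + (x - 1)⁻¹ := by
    have : x ≠ 0 := by linarith
    field_simp
    ring
  calc
    -Real.log (1 - x⁻¹) = Real.log (1 + (x - 1)⁻¹) := by rw [← Real.log_inv, hinv]
    _ ≤ Real.log (2 ^ (J + 1)) := by
      gcongr
      linarith [pow_succ (2 : ℝ) J, one_le_pow₀ one_le_two (n := J) (M₀ := ℝ)]
    _ = (J + 1) * Real.log 2 := by rw [Real.log_pow, Nat.cast_succ]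
    _ ≤ J + 1 := mul_le_of_le_one_right (by positivity) (by linarith [Real.log_two_lt_d9])

theorem lt_ceil_neg_logb_sub_one_iff {x : ℝ} (hx : 1 < x) (j : ℕ) :
    j < ⌈-Real.logb 2 (x - 1)⌉₊ ↔ x < 1 + 1 / (2 ^ j : ℕ) := by
  have hδ : 0 < x - 1 := by linarith
  rw [Nat.lt_ceil, lt_neg, Real.logb_lt_iff_lt_rpow one_lt_two hδ, Real.rpow_neg zero_le_two,
    Real.rpow_natCast, sub_lt_iff_lt_add', one_div, Nat.cast_pow, Nat.cast_ofNat]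

variable {z : ι → ℂ}

theorem summable_mul_ceil_sq_of_log_decay (hz : ∀ k, 1 < ‖z k‖) (hμ : ∀ k, 0 ≤ μ k)
    (hμs : Summable μ) {A C : ℝ} (hA : 2 < A)
    (hdecay : ∀ n : ℕ, 2 ≤ n →
      ∑' k : {k // ‖z k‖ < 1 + 1 / n}, μ k ≤ C * Real.log n ^ (-A)) :
    Summable fun k => μ k * (⌈-Real.logb 2 (‖z k‖ - 1)⌉₊ : ℝ) ^ 2 := by
  let J : ι → ℕ := fun k => ⌈-Real.logb 2 (‖z k‖ - 1)⌉₊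
  have htail (j : ℕ) (hj : j ≠ 0) :
      ∑' k : {k // j < J k}, μ k ≤ C * Real.log 2 ^ (-A) * (j : ℝ) ^ (-A) := by
    have hset : {k | j < J k} = {k | ‖z k‖ < 1 + 1 / (2 ^ j : ℕ)} :=
      Set.ext fun k => lt_ceil_neg_logb_sub_one_iff (hz k) j
    refine (congrArg (fun s : Set ι => ∑' k : s, μ k) hset).trans_le ?_
    refine (hdecay (2 ^ j) (le_self_pow₀ one_le_two hj)).trans_eq ?_
    rw [Nat.cast_pow, Nat.cast_ofNat, Real.log_pow,
      Real.mul_rpow (by positivity) (Real.log_pos one_lt_two).le]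
    ring
  refine summable_mul_sq_of_summable_tail hμ hμs ?_
  have hmaj : Summable fun j : ℕ => 3 * (C * Real.log 2 ^ (-A)) * (j : ℝ) ^ (1 - A) :=
    (Real.summable_nat_rpow.mpr (by linarith)).mul_left _
  refine hmaj.of_norm_bounded_eventually_nat ?_
  filter_upwards [eventually_ne_atTop 0] with j hj
  have h₀ : (0 : ℝ) ≤ ∑' k : {k // j < J k}, μ k := tsum_nonneg fun k => hμ k
  have hj₁ : (1 : ℝ) ≤ j := mod_cast Nat.one_le_iff_ne_zero.mpr hj
  rw [Real.norm_of_nonneg (by positivity)]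
  calc
    _ ≤ 3 * j * (C * Real.log 2 ^ (-A) * (j : ℝ) ^ (-A)) := by
      gcongr
      · linarith
      · exact htail j hj
    _ = _ := by
      rw [sub_eq_add_neg, Real.rpow_add (by positivity), Real.rpow_one]
      ring

theorem summable_mul_log_sq_of_log_decay (hz : ∀ k, 1 < ‖z k‖) (hμ : ∀ k, 0 ≤ μ k)
    (hμs : Summable μ) {A C : ℝ} (hA : 2 < A)
    (hdecay : ∀ n : ℕ, 2 ≤ n →
      ∑' k : {k // ‖z k‖ < 1 + 1 / n}, μ k ≤ C * Real.log n ^ (-A)) :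
    Summable fun k => μ k * Real.log (1 - ‖z k‖⁻¹) ^ 2 := by
  let J : ι → ℕ := fun k => ⌈-Real.logb 2 (‖z k‖ - 1)⌉₊
  have hJ : Summable fun k => μ k * (J k : ℝ) ^ 2 :=
    summable_mul_ceil_sq_of_log_decay hz hμ hμs hA hdecay
  have hmaj : Summable fun k => 2 * (μ k * (J k : ℝ) ^ 2) + 2 * μ k :=
    (hJ.mul_left 2).add (hμs.mul_left 2)
  refine hmaj.of_nonneg_of_le (fun k => mul_nonneg (hμ k) (sq_nonneg _)) fun k => ?_
  have hlog₀ : Real.log (1 - ‖z k‖⁻¹) ≤ 0 := Real.log_nonpos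
    (sub_nonneg.mpr (inv_le_one_of_one_le₀ (hz k).le)) (by simp)
  calc
    μ k * Real.log (1 - ‖z k‖⁻¹) ^ 2 = μ k * (-Real.log (1 - ‖z k‖⁻¹)) ^ 2 := by rw [neg_sq]
    _ ≤ μ k * (J k + 1) ^ 2 := by
      have := hμ k
      have := neg_nonneg.mpr hlog₀
      gcongr
      exact neg_log_one_sub_inv_le (hz k)
    _ ≤ μ k * (2 * ((J k : ℝ) ^ 2 + 1 ^ 2)) :=
      mul_le_mul_of_nonneg_left (add_sq_le ..) (hμ k)
    _ = _ := by ring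

end LogSummability

section PointMasses

variable {ι : Type*} {z : ι → ℂ} {m : ι → ℝ}

/-- The discrete measure `∑ₖ mₖ δ_{zₖ}` with masses `mₖ` at the points `zₖ`; the masses are real
numbers, negative ones being replaced by `0`. -/
noncomputable def pointMasses (z : ι → ℂ) (m : ι → ℝ) : Measure ℂ :=
  Measure.sum fun k => ENNReal.ofReal (m k) • Measure.dirac (z k)

variable {E : Type*} [NormedAddCommGroup E] {f : ℂ → E}

theorem integrable_pointMasses [Countable ι] (hm : ∀ k, 0 ≤ m k) (hms : Summable m) {R : ℝ}
    (hz : ∀ k, ‖z k‖ ≤ R) (hf : Continuous f) : Integrable f (pointMasses z m) := by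
  obtain ⟨M, hM⟩ := (isCompact_closedBall (0 : ℂ) R).exists_bound_of_continuousOn hf.continuousOn
  refine integrable_sum_dirac (fun k => ENNReal.ofReal_ne_top) ?_
  simp only [ENNReal.toReal_ofReal (hm _)]
  exact (hms.mul_right M).of_nonneg_of_le (fun k => mul_nonneg (hm k) (norm_nonneg _)) fun k =>
    mul_le_mul_of_nonneg_left (hM _ (by simpa using hz k)) (hm k)

theorem hasSum_integral_pointMasses [NormedSpace ℝ E] [CompleteSpace E] (hm : ∀ k, 0 ≤ m k)
    (hf : Integrable f (pointMasses z m)) :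
    HasSum (fun k => m k • f (z k)) (∫ x, f x ∂pointMasses z m) := by
  simpa [pointMasses, ENNReal.toReal_ofReal (hm _)] using hasSum_integral_measure hf

end PointMasses

section LeadingCoefficient

variable {ν : Measure ℂ} {n : ℕ} {c : ℕ → ℂ}

theorem integral_norm_sq_sum_haarCircle_add
    (hc : Integrable (fun x => ‖∑ j ∈ range n, c j * x ^ j‖ ^ 2) ν) :
    ∫ x, ‖∑ j ∈ range n, c j * x ^ j‖ ^ 2 ∂(haarCircle + ν) =
      ∑ j ∈ range n, ‖c j‖ ^ 2 + ∫ x, ‖∑ j ∈ range n, c j * x ^ j‖ ^ 2 ∂ν := by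
  rw [integral_add_measure (integrable_haarCircle (by fun_prop)) hc,
    integral_norm_sq_sum_haarCircle]

variable (hν : ∀ f : ℂ → ℝ, Continuous f → Integrable f ν)

include hν

theorem norm_le_one_of_integral_norm_sq_le_one
    (hc : ∫ x, ‖∑ j ∈ range (n + 1), c j * x ^ j‖ ^ 2 ∂(haarCircle + ν) ≤ 1) : ‖c n‖ ≤ 1 := by
  rw [integral_norm_sq_sum_haarCircle_add (hν _ (by fun_prop))] at hc
  rw [← sq_le_one_iff₀ (norm_nonneg _)]
  calc
    ‖c n‖ ^ 2 ≤ ∑ j ∈ range (n + 1), ‖c j‖ ^ 2 :=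
      single_le_sum (f := fun j => ‖c j‖ ^ 2) (fun _ _ => by positivity) (self_mem_range_succ n)
    _ ≤ 1 := (le_add_of_nonneg_right (integral_nonneg fun _ => by positivity)).trans hc

theorem tauSeq_haarCircle_add_le_one : tauSeq (haarCircle + ν) n ≤ 1 := by
  refine Real.sSup_le ?_ zero_le_one
  rintro _ ⟨c, hc, rfl⟩
  exact norm_le_one_of_integral_norm_sq_le_one hν hc

theorem norm_div_sqrt_le_tauSeq_haarCircle_add {Q : ℝ} (hQ : 0 < Q)
    (hc : ∫ x, ‖∑ j ∈ range (n + 1), c j * x ^ j‖ ^ 2 ∂(haarCircle + ν) ≤ Q) :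
    ‖c n‖ / √Q ≤ tauSeq (haarCircle + ν) n := by
  refine le_csSup ⟨1, ?_⟩ ⟨fun j => c j / (√Q : ℂ), ?_, ?_⟩
  · rintro _ ⟨c, hc, rfl⟩
    exact norm_le_one_of_integral_norm_sq_le_one hν hc
  · simp only [div_mul_eq_mul_div, ← sum_div, norm_div, div_pow, Complex.norm_real,
      Real.norm_of_nonneg (Real.sqrt_nonneg Q), Real.sq_sqrt hQ.le, integral_div]
    exact (div_le_one hQ).mpr hc
  · rw [norm_div, Complex.norm_real, Real.norm_of_nonneg (Real.sqrt_nonneg Q)]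

end LeadingCoefficient

section ReversedPartialSums

/-- The reversed partial sum `∑_{j ≤ n} conj(b_{n-j}) xʲ` of the power series with coefficients `b`:
the polynomial `xⁿ conj(S_n(1 / conj x))`, where `S_n(w) = ∑_{j ≤ n} b_j wʲ`. -/
noncomputable def reversedPartialSum (b : ℕ → ℂ) (n : ℕ) (x : ℂ) : ℂ :=
  ∑ j ∈ range (n + 1), conj (b (n - j)) * x ^ j

variable {b : ℕ → ℂ} {x : ℂ}

theorem reversedPartialSum_eq_pow_mul_conj (hx : x ≠ 0) (n : ℕ) :
    reversedPartialSum b n x = x ^ n * conj (∑ j ∈ range (n + 1), b j * (conj x)⁻¹ ^ j) := by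
  rw [reversedPartialSum, ← sum_flip, map_sum, mul_sum]
  refine sum_congr rfl fun j hj => ?_
  have hjn : j ≤ n := Nat.lt_succ_iff.mp (mem_range.mp hj)
  rw [Nat.sub_sub_self hjn, map_mul, map_pow, map_inv₀, Complex.conj_conj, pow_sub₀ _ hx hjn,
    inv_pow]
  ring

theorem reversedPartialSum_eq_neg_inv_mul_conj_tsum (hx : x ≠ 0)
    (hb : HasSum (fun j => b j * (conj x)⁻¹ ^ j) 0) (n : ℕ) :
    reversedPartialSum b n x = -(x⁻¹ * conj (∑' m, b (n + 1 + m) * (conj x)⁻¹ ^ m)) := by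
  set w := (conj x)⁻¹ with hw
  have hsplit : ∑ j ∈ range (n + 1), b j * w ^ j =
      -(w ^ (n + 1) * ∑' m, b (n + 1 + m) * w ^ m) := by
    rw [eq_neg_iff_add_eq_zero, ← tsum_mul_left, ← hb.tsum_eq,
      ← hb.summable.sum_add_tsum_nat_add (n + 1)]
    congr 1
    refine tsum_congr fun m => ?_
    rw [add_comm m, pow_add]
    ring
  rw [reversedPartialSum_eq_pow_mul_conj hx, ← hw, hsplit, map_neg, map_mul, map_pow, hw, map_inv₀,
    Complex.conj_conj, mul_neg, ← mul_assoc, pow_succ, ← mul_assoc, ← mul_pow, mul_inv_cancel₀ hx,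
    one_pow, one_mul]

theorem norm_reversedPartialSum_le (hx : 1 ≤ ‖x‖)
    (hb : HasSum (fun j => b j * (conj x)⁻¹ ^ j) 0) (n : ℕ) :
    ‖reversedPartialSum b n x‖ ≤ ‖∑' m, b (n + 1 + m) * (conj x)⁻¹ ^ m‖ := by
  have hx₀ : x ≠ 0 := norm_pos_iff.mp (one_pos.trans_le hx)
  rw [reversedPartialSum_eq_neg_inv_mul_conj_tsum hx₀ hb, norm_neg, norm_mul, norm_inv,
    RCLike.norm_conj]
  exact mul_le_of_le_one_left (norm_nonneg _) (inv_le_one_of_one_le₀ hx)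

variable (hb₂ : ∀ n, ∑ j ∈ range n, ‖b j‖ ^ 2 ≤ 1)

include hb₂

theorem tendsto_tsum_tail_zero {w : ℂ} (hw : ‖w‖ < 1) :
    Tendsto (fun n => ∑' m, b (n + m) * w ^ m) atTop (𝓝 0) := by
  have hsq : Summable fun j => ‖b j‖ ^ 2 := summable_of_sum_range_le (fun _ => by positivity) hb₂
  have hb₁ (j : ℕ) : ‖b j‖ ≤ 1 := by
    rw [← sq_le_one_iff₀ (norm_nonneg _)]
    exact (hsq.le_tsum j fun _ _ => by positivity).trans (hsq.tsum_le_of_sum_range_le hb₂)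
  have hb₀ : Tendsto b atTop (𝓝 0) := tendsto_zero_iff_norm_tendsto_zero.mpr <| by
    simpa using hsq.tendsto_atTop_zero.sqrt
  simpa using tendsto_tsum_mul_pow (fun n m => hb₁ (n + m))
    (fun m => hb₀.comp (tendsto_add_atTop_nat m)) hw

variable {ι : Type*} {z : ι → ℂ} {m : ι → ℝ} (hm : ∀ k, 0 ≤ m k)

include hm

theorem integral_norm_sq_reversedPartialSum_le (n : ℕ)
    (hint : Integrable (fun x => ‖reversedPartialSum b n x‖ ^ 2) (pointMasses z m)) :
    ∫ x, ‖reversedPartialSum b n x‖ ^ 2 ∂(haarCircle + pointMasses z m) ≤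
      1 + ∑' k, m k * ‖reversedPartialSum b n (z k)‖ ^ 2 := by
  have hpoints := (hasSum_integral_pointMasses hm hint).tsum_eq
  simp only [smul_eq_mul] at hpoints
  rw [hpoints]
  simp only [reversedPartialSum] at hint ⊢
  rw [integral_norm_sq_sum_haarCircle_add hint]
  gcongr
  simpa only [RCLike.norm_conj, sum_flip fun j => ‖b j‖ ^ 2] using hb₂ (n + 1)

theorem tendsto_tsum_mul_norm_sq_reversedPartialSum (hz : ∀ k, 1 < ‖z k‖) (hms : Summable m)
    (hlog : Summable fun k => m k * Real.log (1 - ‖z k‖⁻¹) ^ 2)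
    (hzero : ∀ k, HasSum (fun j => b j * (conj (z k))⁻¹ ^ j) 0)
    (htail : ∀ n w, ‖w‖ < 1 → ‖∑' j, b (n + j) * w ^ j‖ ≤ 2 * (2 - Real.log (1 - ‖w‖))) :
    Tendsto (fun n => ∑' k, m k * ‖reversedPartialSum b n (z k)‖ ^ 2) atTop (𝓝 0) := by
  have hnorm (k : ι) : ‖(conj (z k))⁻¹‖ = ‖z k‖⁻¹ := by rw [norm_inv, RCLike.norm_conj]
  have hw (k : ι) : ‖(conj (z k))⁻¹‖ < 1 := (hnorm k).trans_lt (inv_lt_one_of_one_lt₀ (hz k))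
  have hP (n : ℕ) (k : ι) := norm_reversedPartialSum_le (hz k).le (hzero k) n
  have hP₀ (k : ι) : Tendsto (fun n => reversedPartialSum b n (z k)) atTop (𝓝 0) :=
    squeeze_zero_norm (hP · k) <| tendsto_norm_zero.comp <|
      (tendsto_tsum_tail_zero hb₂ (hw k)).comp (tendsto_add_atTop_nat 1)
  have hmaj : Summable fun k => 8 * (4 * m k + m k * Real.log (1 - ‖z k‖⁻¹) ^ 2) :=
    ((hms.mul_left 4).add hlog).mul_left 8
  rw [← tsum_zero (α := ℝ) (β := ι)]
  refine tendsto_tsum_of_dominated_convergence hmaj (fun k => ?_)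
    (Eventually.of_forall fun n k => ?_)
  · simpa using ((hP₀ k).norm.pow 2).const_mul (m k)
  · rw [Real.norm_of_nonneg (mul_nonneg (hm k) (sq_nonneg _))]
    calc
      _ ≤ m k * (2 * (2 - Real.log (1 - ‖z k‖⁻¹))) ^ 2 := by
        have hle := (hP n k).trans (htail (n + 1) _ (hw k))
        rw [hnorm] at hle
        have := hm k
        gcongr
      _ ≤ m k * (8 * (4 + Real.log (1 - ‖z k‖⁻¹) ^ 2)) := by
        refine mul_le_mul_of_nonneg_left ?_ (hm k)
        linarith [sq_nonneg (2 + Real.log (1 - ‖z k‖⁻¹))]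
      _ = _ := by ring

end ReversedPartialSums

theorem le_liminf_of_div_sqrt_one_add_le {u D : ℕ → ℝ} {L M : ℝ} (hD : Tendsto D atTop (𝓝 0))
    (hlower : ∀ n, L / √(1 + D n) ≤ u n) (hupper : ∀ n, u n ≤ M) : L ≤ liminf u atTop := by
  have hlim : Tendsto (fun n => L / √(1 + D n)) atTop (𝓝 L) := by
    simpa [Pi.div_def] using (tendsto_const_nhds (x := L)).div (hD.const_add 1).sqrt (by simp)
  rw [← hlim.liminf_eq]
  exact liminf_le_liminf (Eventually.of_forall hlower) hlim.isBoundedUnder_ge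
    (isBoundedUnder_of ⟨M, hupper⟩).isCoboundedUnder_ge

theorem multipliable_inv_of_summable_sub_one {ι : Type*} {r : ι → ℝ} (hr : ∀ k, 1 ≤ r k)
    (hs : Summable fun k => r k - 1) : Multipliable fun k => (r k)⁻¹ := by
  have hinv : Summable fun k => (r k)⁻¹ - 1 := by
    refine hs.of_norm_bounded fun k => ?_
    have hk₀ : 0 < r k := one_pos.trans_le (hr k)
    calc
      ‖(r k)⁻¹ - 1‖ = (r k - 1) / r k := by
        rw [Real.norm_of_nonpos (by linarith [inv_le_one_of_one_le₀ (hr k)])]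
        field_simp
        ring
      _ ≤ r k - 1 := div_le_self (by linarith [hr k]) (hr k)
  simpa using Real.multipliable_one_add_of_summable hinv

theorem tau_liminf_general {ι : Type*} (z : ι → ℂ) (hz : ∀ k, 1 < ‖z k‖)
    (hblaschke : Summable fun k => ‖z k‖ - 1) (m : ι → ℝ) (hm : ∀ k, 0 ≤ m k) (hms : Summable m)
    (hlog : Summable fun k => m k * Real.log (1 - ‖z k‖⁻¹) ^ 2) :
    ∏' k, ‖z k‖⁻¹ ≤ liminf (tauSeq (haarCircle + pointMasses z m)) atTop := by
  have : Countable ι := Set.countable_univ_iff.mp <| hblaschke.countable_support.mono fun k _ =>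
    (sub_pos.mpr (hz k)).ne'
  have hbounded (k : ι) : ‖z k‖ ≤ ∑' i, (‖z i‖ - 1) + 1 :=
    sub_le_iff_le_add.mp (hblaschke.le_tsum k fun i _ => (sub_pos.mpr (hz i)).le)
  have hint (f : ℂ → ℝ) (hf : Continuous f) : Integrable f (pointMasses z m) :=
    integrable_pointMasses hm hms hbounded hf
  have hprod : HasProd (fun k => ‖(conj (z k))⁻¹‖) (∏' k, ‖z k‖⁻¹) := by
    simpa using (multipliable_inv_of_summable_sub_one (fun k => (hz k).le) hblaschke).hasProd
  have hw (k : ι) : ‖(conj (z k))⁻¹‖ < 1 := by simpa using inv_lt_one_of_one_lt₀ (hz k)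
  obtain ⟨b, hb₀, hb₂, hzero, htail⟩ := exists_blaschke_coeff hw hprod
  refine le_liminf_of_div_sqrt_one_add_le
    (tendsto_tsum_mul_norm_sq_reversedPartialSum hb₂ hm hz hms hlog hzero htail)
    (fun n => ?_) (fun n => tauSeq_haarCircle_add_le_one hint)
  have hpos : 0 ≤ ∑' k, m k * ‖reversedPartialSum b n (z k)‖ ^ 2 :=
    tsum_nonneg fun k => mul_nonneg (hm k) (sq_nonneg _)
  have henergy := integral_norm_sq_reversedPartialSum_le hb₂ hm n
    (hint (fun x => ‖reversedPartialSum b n x‖ ^ 2) (by unfold reversedPartialSum; fun_prop))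
  simpa [hb₀] using norm_div_sqrt_le_tauSeq_haarCircle_add hint (by positivity) henergy

/-- Lower estimate for `τ_n` in the case of weight `w ≡ 1`, under the logarithmic decay
condition on the masses: `liminf τ_n ≥ B(0) = ∏ |z_k|⁻¹`. -/
theorem tau_liminf (z : ℕ → ℂ) (hz : ∀ k, 1 < ‖z k‖)
    (hblaschke : Summable (fun k => ‖z k‖ - 1))
    (μk : ℕ → ℝ) (hμk : ∀ k, 0 < μk k) (hμs : Summable μk)
    (hlog : ∀ A : ℝ, 0 < A → ∃ C : ℝ, ∀ n : ℕ, 2 ≤ n →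
      (∑' k : {k : ℕ // ‖z k‖ < 1 + 1 / n}, μk k) ≤ C * Real.log n ^ (-A)) :
    (∏' k, ‖z k‖⁻¹) ≤
      liminf
        (tauSeq (haarCircle +
          Measure.sum (fun k => ENNReal.ofReal (μk k) • Measure.dirac (z k))))
        atTop := by
  obtain ⟨C, hC⟩ := hlog 3 three_pos
  exact tau_liminf_general z hz hblaschke μk (fun k => (hμk k).le) hμs
    (summable_mul_log_sq_of_log_decay hz (fun k => (hμk k).le) hμs (by norm_num) hC)
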